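/- arXiv:2211.03855 — 5 statements merged into one kernel-verified Lean document; each statement's English description precedes it below -/
import Mathlib

section
/- (Hexagon-equation solution for Fibonacci anyons.) Let φ = (1+√5)/2 be the golden ratio, and let R₁ = exp(-4πI/5) and Rτ = exp(3πI/5) as complex numbers. Then: (i) φ⁻¹ + Rτ = R₁², (ii) φ⁻¹ − φ⁻¹·Rτ = R₁·Rτ, and (iii) Rτ² + φ⁻¹·Rτ + 1 = 0. -/
/-!
Put `z = exp(πI/5)`, so that `z⁵ = -1`, `Rτ = z³` and `R₁ = z⁻⁴ = -z`. Since `cos(π/5) = φ/2`, one has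
`φ = z + z⁻¹ = z - z⁴`. Substituting this into `φ² = φ + 1` gives `z⁴ - z³ + z² - z + 1 = 0`, hence
`φ⁻¹ = z² - z³`, and all three hexagon identities become polynomial identities in `z` modulo these
relations.
-/

open Complex

/-- The golden ratio `φ = (1+√5)/2`, regarded as a complex number. -/
noncomputable def phiC : ℂ := ((1 + Real.sqrt 5) / 2 : ℝ)

lemma exp_pi_div_five_pow_five : Complex.exp ((Real.pi : ℂ) * Complex.I / 5) ^ 5 = -1 := by
  rw [← Complex.exp_nat_mul, ← Complex.exp_pi_mul_I]
  congr 1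
  push_cast
  ring

lemma phiC_eq : phiC = Complex.exp ((Real.pi : ℂ) * Complex.I / 5)
    - Complex.exp ((Real.pi : ℂ) * Complex.I / 5) ^ 4 := by
  have h5 := exp_pi_div_five_pow_five
  have hinv : Complex.exp (-((Real.pi : ℂ) / 5) * Complex.I)
      = -Complex.exp ((Real.pi : ℂ) * Complex.I / 5) ^ 4 := by
    have h : Complex.exp (-((Real.pi : ℂ) / 5) * Complex.I)
        = (Complex.exp ((Real.pi : ℂ) * Complex.I / 5))⁻¹ := by
      rw [← Complex.exp_neg]
      congr 1
      ring
    rw [h]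
    exact inv_eq_of_mul_eq_one_right (by linear_combination -h5)
  have hcos : phiC = 2 * Complex.cos ((Real.pi : ℂ) / 5) := by
    have h : phiC = ((2 * Real.cos (Real.pi / 5) : ℝ) : ℂ) := by
      rw [phiC, Real.cos_pi_div_five]
      congr 1
      ring
    rw [h]
    push_cast
    rfl
  rw [hcos, Complex.two_cos, hinv, ← sub_eq_add_neg, div_mul_eq_mul_div]

lemma phiC_sq : phiC ^ 2 = phiC + 1 := by
  have h : ((Real.sqrt 5 : ℝ) : ℂ) ^ 2 = 5 := by
    rw [← Complex.ofReal_pow, Real.sq_sqrt (by norm_num)]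
    norm_num
  rw [phiC]
  push_cast
  linear_combination h / 4

lemma phiC_inv_eq : phiC⁻¹ = Complex.exp ((Real.pi : ℂ) * Complex.I / 5) ^ 2
    - Complex.exp ((Real.pi : ℂ) * Complex.I / 5) ^ 3 := by
  have h5 := exp_pi_div_five_pow_five
  have hsq := phiC_sq
  rw [phiC_eq] at hsq ⊢
  generalize Complex.exp ((Real.pi : ℂ) * Complex.I / 5) = z at *
  refine inv_eq_of_mul_eq_one_right ?_
  linear_combination -hsq + (z ^ 3 + z ^ 2 - z - 2) * h5

/-- Hexagon-equation solution for Fibonacci anyons: with `R₁ = exp(-4πI/5)` and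
`Rτ = exp(3πI/5)`, one has `φ⁻¹ + Rτ = R₁²`, `φ⁻¹ - φ⁻¹ Rτ = R₁ Rτ`, and
`Rτ² + φ⁻¹ Rτ + 1 = 0`. -/
theorem fibonacci_hexagon_solution :
    phiC⁻¹ + Complex.exp (3 * (Real.pi : ℂ) * Complex.I / 5)
      = (Complex.exp (-4 * (Real.pi : ℂ) * Complex.I / 5)) ^ 2 ∧
    phiC⁻¹ - phiC⁻¹ * Complex.exp (3 * (Real.pi : ℂ) * Complex.I / 5)
      = Complex.exp (-4 * (Real.pi : ℂ) * Complex.I / 5)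
          * Complex.exp (3 * (Real.pi : ℂ) * Complex.I / 5) ∧
    (Complex.exp (3 * (Real.pi : ℂ) * Complex.I / 5)) ^ 2
      + phiC⁻¹ * Complex.exp (3 * (Real.pi : ℂ) * Complex.I / 5) + 1 = 0 := by
  have h5 := exp_pi_div_five_pow_five
  have hsq := phiC_sq
  have hRt : Complex.exp (3 * (Real.pi : ℂ) * Complex.I / 5)
      = Complex.exp ((Real.pi : ℂ) * Complex.I / 5) ^ 3 := by
    rw [← Complex.exp_nat_mul]
    congr 1
    push_cast
    ring
  have hR1 : Complex.exp (-4 * (Real.pi : ℂ) * Complex.I / 5)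
      = -Complex.exp ((Real.pi : ℂ) * Complex.I / 5) := by
    have h : -4 * (Real.pi : ℂ) * Complex.I / 5
        = (Real.pi : ℂ) * Complex.I / 5 - (Real.pi : ℂ) * Complex.I := by ring
    rw [h, Complex.exp_sub, Complex.exp_pi_mul_I, div_neg, div_one]
  rw [phiC_eq] at hsq
  rw [hRt, hR1, phiC_inv_eq]
  generalize Complex.exp ((Real.pi : ℂ) * Complex.I / 5) = z at *
  refine ⟨by ring, ?_, ?_⟩
  · linear_combination hsq + (z - 1 - z ^ 3 + 2) * h5
  · linear_combination h5
end

section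
/- Let θ = 2·arccos(φ⁻¹). The Fibonacci F-matrix equals the Z-X-Z phase-gate chain up to an explicit phase: F = exp(-θ·I/2) • (Z(π/2) * X(θ) * Z(π/2)). -/
/-!
Write `a = arccos φ⁻¹ = θ/2`. Conjugating `Z(2a)` by the Hadamard matrix and removing the phase
`exp(a I)` gives `exp(-a I) • X(2a) = !![cos a, -I sin a; -I sin a, cos a]`, and multiplying by
`Z(π/2) = diag(1, I)` on both sides turns this into `!![cos a, sin a; sin a, -cos a]`.
Here `cos a = φ⁻¹`, and `sin a = √(1 - φ⁻²) = √(φ⁻¹) = φ^(-1/2)` because `φ² = φ + 1`.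
-/

open Matrix Complex

/-- The golden ratio `φ = (1+√5)/2`. -/
noncomputable def phi : ℝ := (1 + Real.sqrt 5) / 2

/-- The Z-phase gate `Z(α)`. -/
noncomputable def Zg (α : ℝ) : Matrix (Fin 2) (Fin 2) ℂ :=
  !![1, 0; 0, Complex.exp ((α : ℂ) * Complex.I)]

/-- The Hadamard matrix. -/
noncomputable def Hm : Matrix (Fin 2) (Fin 2) ℂ :=
  ((1 / Real.sqrt 2 : ℝ) : ℂ) • !![1, 1; 1, -1]

/-- The X-phase gate `X(α) = H * Z(α) * H`. -/
noncomputable def Xg (α : ℝ) : Matrix (Fin 2) (Fin 2) ℂ := Hm * Zg α * Hm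

/-- The Fibonacci F-matrix `F = !![φ⁻¹, φ^(-1/2); φ^(-1/2), -φ⁻¹]`. -/
noncomputable def Fm : Matrix (Fin 2) (Fin 2) ℂ :=
  !![((phi⁻¹ : ℝ) : ℂ), ((phi ^ (-(1 : ℝ) / 2) : ℝ) : ℂ);
     ((phi ^ (-(1 : ℝ) / 2) : ℝ) : ℂ), -((phi⁻¹ : ℝ) : ℂ)]

theorem phi_pos : 0 < phi := by
  unfold phi; positivity

theorem phi_sq : phi ^ 2 = phi + 1 := by
  have h : Real.sqrt 5 ^ 2 = 5 := Real.sq_sqrt (by norm_num)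
  unfold phi
  linear_combination h / 4

theorem cos_arccos_phi_inv : Real.cos (Real.arccos phi⁻¹) = phi⁻¹ := by
  have h0 : 0 < phi⁻¹ := inv_pos.mpr phi_pos
  have h1 : 1 ≤ phi := by nlinarith [phi_sq, phi_pos]
  exact Real.cos_arccos (by linarith) (inv_le_one_of_one_le₀ h1)

theorem sin_arccos_phi_inv :
    Real.sin (Real.arccos phi⁻¹) = phi ^ (-(1 : ℝ) / 2) := by
  have h : 1 - phi⁻¹ ^ 2 = phi⁻¹ := by
    have := phi_pos.ne'
    field_simp
    linear_combination phi_sq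
  rw [Real.sin_arccos, h, Real.sqrt_eq_rpow, Real.inv_rpow phi_pos.le,
    ← Real.rpow_neg phi_pos.le, neg_div]

/-- The Z-X-Z chain with its phase removed is a real reflection, for every angle `a`. -/
theorem zxz_chain_eq_reflection (a : ℝ) :
    Complex.exp (-((2 * a : ℝ) : ℂ) * Complex.I / 2) •
      (Zg (Real.pi / 2) * Xg (2 * a) * Zg (Real.pi / 2)) =
    !![((Real.cos a : ℝ) : ℂ), ((Real.sin a : ℝ) : ℂ);
       ((Real.sin a : ℝ) : ℂ), -((Real.cos a : ℝ) : ℂ)] := by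
  have hm : Complex.exp (-((2 * a : ℝ) : ℂ) * Complex.I / 2)
      = Complex.cos a - Complex.sin a * Complex.I := by
    rw [show -((2 * a : ℝ) : ℂ) * Complex.I / 2 = (-(a : ℂ)) * Complex.I by push_cast; ring,
      Complex.exp_mul_I, Complex.cos_neg, Complex.sin_neg]
    ring
  have hE : Complex.exp (((2 * a : ℝ) : ℂ) * Complex.I)
      = (Complex.cos a + Complex.sin a * Complex.I) ^ 2 := by
    rw [← Complex.exp_mul_I, ← Complex.exp_nat_mul]
    congr 1
    push_cast
    ring
  have hp : Complex.exp (((Real.pi / 2 : ℝ) : ℂ) * Complex.I) = Complex.I := by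
    push_cast
    exact Complex.exp_pi_div_two_mul_I
  have hr : ((1 / Real.sqrt 2 : ℝ) : ℂ) ^ 2 = 1 / 2 := by
    rw [← Complex.ofReal_pow, div_pow, Real.sq_sqrt (by norm_num)]
    norm_num
  have hcs := Complex.sin_sq_add_cos_sq (a : ℂ)
  have hI := Complex.I_sq
  unfold Xg Zg Hm
  rw [hm, hE, hp, Complex.ofReal_cos, Complex.ofReal_sin]
  generalize ((1 / Real.sqrt 2 : ℝ) : ℂ) = r at *
  generalize Complex.cos (a : ℂ) = c at *
  generalize Complex.sin (a : ℂ) = s at *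
  generalize Complex.I = i at *
  -- `exp(-a I) * exp(2 a I) = exp(a I)`, in terms of `c = cos a` and `s = sin a`
  have hX : (c - s * i) * (c + s * i) ^ 2 = c + s * i := by
    linear_combination (c + s * i) * hcs - (c + s * i) * s ^ 2 * hI
  ext j k
  fin_cases j <;> fin_cases k <;>
    simp
  · linear_combination 2 * c * hr + r ^ 2 * hX
  · linear_combination -2 * s * i ^ 2 * hr - s * hI - r ^ 2 * i * hX
  · linear_combination -2 * s * i ^ 2 * hr - s * hI - r ^ 2 * i * hX
  · linear_combination 2 * c * i ^ 2 * hr + c * hI + r ^ 2 * i ^ 2 * hX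

/-- For `θ = 2 arccos(φ⁻¹)`, the Fibonacci F-matrix equals the Z-X-Z phase-gate chain up to an
explicit phase: `F = exp(-θI/2) • (Z(π/2) * X(θ) * Z(π/2))`. -/
theorem F_matrix_eq_zxz_chain :
    Fm = Complex.exp (-((2 * Real.arccos phi⁻¹ : ℝ) : ℂ) * Complex.I / 2) •
      (Zg (Real.pi / 2) * Xg (2 * Real.arccos phi⁻¹) * Zg (Real.pi / 2)) := by
  rw [zxz_chain_eq_reflection, cos_arccos_phi_inv, sin_arccos_phi_inv, Fm]
end

section
/- Let R = exp(7πI/5). Then F * R₁ * F = exp(-4πI/5) • !![φ⁻² + R·φ⁻¹, φ^(-3/2)·(1−R); φ^(-3/2)·(1−R), φ⁻¹ + R·φ⁻²]. -/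
/-!
The scalar `exp(-4πI/5)` factors out of the product, and the remaining 2×2 product is computed
entrywise. With `a = φ⁻¹` and `b = φ^(-1/2)`, the entries agree because `b * b = a` and
`φ^(-3/2) = a * b`; the quadratic equation of the golden ratio plays no role, only `φ > 0`.
-/

open Matrix Complex

/-- The Fibonacci braid matrix `R₁ = exp(-4πI/5) • !![1, 0; 0, exp(7πI/5)]`. -/
noncomputable def R1 : Matrix (Fin 2) (Fin 2) ℂ :=
  Complex.exp (-4 * (Real.pi : ℂ) * Complex.I / 5) •
    !![1, 0; 0, Complex.exp (7 * (Real.pi : ℂ) * Complex.I / 5)]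

/-- With `R = exp(7πI/5)`,
`F * R₁ * F = exp(-4πI/5) • !![φ⁻² + Rφ⁻¹, φ^(-3/2)(1-R); φ^(-3/2)(1-R), φ⁻¹ + Rφ⁻²]`. -/
theorem F_R1_F_explicit :
    Fm * R1 * Fm = Complex.exp (-4 * (Real.pi : ℂ) * Complex.I / 5) •
      !![((phi⁻¹ ^ 2 : ℝ) : ℂ) + Complex.exp (7 * (Real.pi : ℂ) * Complex.I / 5) * ((phi⁻¹ : ℝ) : ℂ),
         ((phi ^ (-(3 : ℝ) / 2) : ℝ) : ℂ) * (1 - Complex.exp (7 * (Real.pi : ℂ) * Complex.I / 5));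
         ((phi ^ (-(3 : ℝ) / 2) : ℝ) : ℂ) * (1 - Complex.exp (7 * (Real.pi : ℂ) * Complex.I / 5)),
         ((phi⁻¹ : ℝ) : ℂ) + Complex.exp (7 * (Real.pi : ℂ) * Complex.I / 5) * ((phi⁻¹ ^ 2 : ℝ) : ℂ)] := by
  have hpos : 0 < phi := by unfold phi; positivity
  have hb : ((phi ^ (-(1 : ℝ) / 2) : ℝ) : ℂ) * ((phi ^ (-(1 : ℝ) / 2) : ℝ) : ℂ)
      = ((phi⁻¹ : ℝ) : ℂ) := by
    rw [← Complex.ofReal_mul, ← Real.rpow_add hpos, ← Real.rpow_neg_one]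
    norm_num
  have hc : ((phi ^ (-(3 : ℝ) / 2) : ℝ) : ℂ)
      = ((phi⁻¹ : ℝ) : ℂ) * ((phi ^ (-(1 : ℝ) / 2) : ℝ) : ℂ) := by
    rw [← Complex.ofReal_mul, ← Real.rpow_neg_one, ← Real.rpow_add hpos]
    norm_num
  rw [hc, Complex.ofReal_pow]
  unfold Fm R1
  generalize ((phi ^ (-(1 : ℝ) / 2) : ℝ) : ℂ) = b at hb ⊢
  generalize ((phi⁻¹ : ℝ) : ℂ) = a at hb ⊢
  generalize Complex.exp (7 * (Real.pi : ℂ) * Complex.I / 5) = R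
  rw [Matrix.mul_smul, Matrix.smul_mul]
  congr 1
  ext i j
  fin_cases i <;> fin_cases j <;> simp [Matrix.mul_apply, Fin.sum_univ_two]
  · linear_combination R * hb
  · ring
  · ring
  · linear_combination hb
end

section
/- The triple braid of Fibonacci anyons equals the F-matrix up to an explicit phase: R₂ * R₁ * R₂ = exp(-4πI/5) • F. -/
/-!
Put `z = exp(πI/5)`, so that `z⁵ = -1`, `R₁ = diag(-z, z³)` and `z + z⁻¹ = φ`. The matrix
`M = F R₁` has trace `-z²` and determinant `z⁴`, so `M² + z² M + z⁴ = 0` (`braid_quadratic`) and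
hence `M³ = z⁶ = -z = exp(-4πI/5)`. Since `R₂ R₁ R₂ = (F R₁)³ F`, the identity follows.
-/

open Matrix Complex

/-- The Fibonacci braid matrix `R₂ = F * R₁ * F`. -/
noncomputable def R2 : Matrix (Fin 2) (Fin 2) ℂ := Fm * R1 * Fm

/-- The quadratic relation holds because `M = F R₁`, here with `F = !![a, t; t, -a]` and
`R₁ = diag(-z, z³)`, has trace `-z²` and determinant `z⁴` (Cayley–Hamilton). -/
lemma braid_quadratic {a t z : ℂ} (ht : t * t = a) (ha : a = z ^ 2 - z ^ 3)
    (hz : z ^ 4 = z ^ 3 - z ^ 2 + z - 1) (M : Matrix (Fin 2) (Fin 2) ℂ)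
    (hM : M = !![a, t; t, -a] * !![-z, 0; 0, z ^ 3]) :
    M * M = -(z ^ 2 • M) - z ^ 4 • (1 : Matrix (Fin 2) (Fin 2) ℂ) := by
  subst hM
  ext i j
  fin_cases i <;> fin_cases j <;>
    simp [Matrix.mul_apply, Fin.sum_univ_two] <;> grind

/-- The triple braid of Fibonacci anyons equals the F-matrix up to an explicit phase:
`R₂ R₁ R₂ = exp(-4πI/5) • F`. -/
theorem fibonacci_triple_braid_eq_F :
    R2 * R1 * R2 = Complex.exp (-4 * (Real.pi : ℂ) * Complex.I / 5) • Fm := by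
  obtain ⟨z, hzdef⟩ : ∃ z, z = Complex.exp ((Real.pi : ℂ) * Complex.I / 5) := ⟨_, rfl⟩
  have z5 : z ^ 5 = -1 := by
    rw [hzdef, ← Complex.exp_nat_mul, ← Complex.exp_pi_mul_I]
    congr 1
    push_cast
    ring
  have z0 : z ≠ 0 := by rw [hzdef]; exact Complex.exp_ne_zero _
  have e4 : Complex.exp (-4 * (Real.pi : ℂ) * Complex.I / 5) = -z := by
    have h : Complex.exp (-4 * (Real.pi : ℂ) * Complex.I / 5) * z ^ 4 = 1 := by
      rw [hzdef, ← Complex.exp_nat_mul, ← Complex.exp_add, ← Complex.exp_zero]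
      congr 1
      push_cast
      ring
    apply mul_right_cancel₀ (pow_ne_zero 4 z0)
    rw [h]
    linear_combination z5
  have e7 : Complex.exp (7 * (Real.pi : ℂ) * Complex.I / 5) = -z ^ 2 := by
    have h : Complex.exp (7 * (Real.pi : ℂ) * Complex.I / 5) = z ^ 7 := by
      rw [hzdef, ← Complex.exp_nat_mul]
      congr 1
      push_cast
      ring
    rw [h]
    linear_combination z ^ 2 * z5
  have phi_pos : 0 < phi := by unfold phi; positivity
  have phi_sq : phi ^ 2 = phi + 1 := by
    have := Real.sq_sqrt (show (0 : ℝ) ≤ 5 by norm_num)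
    unfold phi
    linear_combination this / 4
  have inv_phi : phi⁻¹ = phi - 1 := by
    field_simp
    linear_combination -phi_sq
  -- `z + z⁻¹ = 2 cos (π/5) = φ`
  have hphi : (phi : ℂ) * z = z ^ 2 + 1 := by
    have hc : (phi : ℂ) = 2 * Complex.cos ((Real.pi / 5 : ℝ) : ℂ) := by
      rw [← Complex.ofReal_cos, Real.cos_pi_div_five, phi]
      push_cast
      ring
    have hneg : Complex.exp (-((Real.pi / 5 : ℝ) : ℂ) * Complex.I) * z = 1 := by
      rw [hzdef, ← Complex.exp_add, ← Complex.exp_zero]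
      congr 1
      push_cast
      ring
    have hpos : Complex.exp (((Real.pi / 5 : ℝ) : ℂ) * Complex.I) = z := by
      rw [hzdef]
      congr 1
      push_cast
      ring
    rw [hc, Complex.two_cos, hpos]
    linear_combination hneg
  have phi_sq' : (phi : ℂ) ^ 2 = phi + 1 := by exact_mod_cast phi_sq
  have hphi' : (phi : ℂ) = z - z ^ 4 := by
    apply mul_right_cancel₀ z0
    linear_combination hphi + z5
  have hz : z ^ 4 = z ^ 3 - z ^ 2 + z - 1 := by
    apply mul_left_cancel₀ z0
    rw [hphi'] at phi_sq'
    grind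
  obtain ⟨a, hadef⟩ : ∃ a : ℂ, a = ((phi⁻¹ : ℝ) : ℂ) := ⟨_, rfl⟩
  obtain ⟨t, htdef⟩ : ∃ t : ℂ, t = ((phi ^ (-(1 : ℝ) / 2) : ℝ) : ℂ) := ⟨_, rfl⟩
  have ha : a = z ^ 2 - z ^ 3 := by
    rw [hadef, inv_phi]
    push_cast
    linear_combination hphi' - hz
  have ht : t * t = a := by
    rw [htdef, hadef, ← Complex.ofReal_mul, ← Real.rpow_add phi_pos]
    norm_num [Real.rpow_neg_one]
  have hF : Fm = !![a, t; t, -a] := by rw [Fm, hadef, htdef]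
  have hR : R1 = !![-z, 0; 0, z ^ 3] := by
    rw [R1, e4, e7]
    ext i j
    fin_cases i <;> fin_cases j <;> simp <;> ring
  have hq := braid_quadratic ht ha hz (Fm * R1) (by rw [hF, hR])
  -- `M³ = z⁶` follows from `M² + z² M + z⁴ = 0`.
  have hcube : Fm * R1 * (Fm * R1) * (Fm * R1) = (-z) • (1 : Matrix (Fin 2) (Fin 2) ℂ) := by
    rw [hq, sub_mul, neg_mul, smul_mul_assoc, smul_mul_assoc, hq, one_mul, smul_sub, smul_neg,
      smul_smul, smul_smul]
    have h6 : z ^ 2 * z ^ 4 = -z := by linear_combination z * z5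
    rw [h6, ← pow_add]
    abel
  calc R2 * R1 * R2 = Fm * R1 * (Fm * R1) * (Fm * R1) * Fm := by
        simp only [R2, Matrix.mul_assoc]
    _ = _ := by rw [hcube, e4, smul_mul_assoc, one_mul]
end

section
/- (Yang–Baxter equations for the Ising representation of B₆.) The five 4×4 matrices ρ₁, ρ₂, ρ₃, ρ₄, ρ₅ satisfy ρᵢ * ρᵢ₊₁ * ρᵢ = ρᵢ₊₁ * ρᵢ * ρᵢ₊₁ for each i ∈ {1, 2, 3, 4}. -/
/-!
Write each generator as a scalar times a matrix over `ℤ[I]`: the odd ones are `a • D` with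
`a = exp(πI/8)` and `D` diagonal, the even ones `b • M` with `b = -exp(-πI/8)/√2`.
For each neighbouring pair, `M * D * M = -(1 + I) • (D * M * D)`, a finite computation using
only `I² = -1`. The braid relation `a² b • (D * M * D) = a b² • (M * D * M)` therefore reduces
to the scalar identity `a = -(1 + I) b` (`phase_eq`), which is `exp(πI/4) = (1 + I)/√2`.
-/

open Matrix Complex

/-- First Ising two-qubit braid generator `ρ₁ = exp(πI/8) • diag(-1, -1, I, I)`. -/
noncomputable def ρ1 : Matrix (Fin 4) (Fin 4) ℂ :=
  Complex.exp ((Real.pi : ℂ) * Complex.I / 8) •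
    Matrix.diagonal ![-1, -1, Complex.I, Complex.I]

/-- Second Ising two-qubit braid generator. -/
noncomputable def ρ2 : Matrix (Fin 4) (Fin 4) ℂ :=
  (-(Complex.exp (-(Real.pi : ℂ) * Complex.I / 8) / ((Real.sqrt 2 : ℝ) : ℂ))) •
    !![1, 0, Complex.I, 0; 0, 1, 0, Complex.I; Complex.I, 0, 1, 0; 0, Complex.I, 0, 1]

/-- Third Ising two-qubit braid generator `ρ₃ = exp(πI/8) • diag(-1, I, I, -1)`. -/
noncomputable def ρ3 : Matrix (Fin 4) (Fin 4) ℂ :=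
  Complex.exp ((Real.pi : ℂ) * Complex.I / 8) •
    Matrix.diagonal ![-1, Complex.I, Complex.I, -1]

/-- Fourth Ising two-qubit braid generator. -/
noncomputable def ρ4 : Matrix (Fin 4) (Fin 4) ℂ :=
  (-(Complex.exp (-(Real.pi : ℂ) * Complex.I / 8) / ((Real.sqrt 2 : ℝ) : ℂ))) •
    !![1, Complex.I, 0, 0; Complex.I, 1, 0, 0; 0, 0, 1, Complex.I; 0, 0, Complex.I, 1]

/-- Fifth Ising two-qubit braid generator `ρ₅ = exp(πI/8) • diag(-1, I, -1, I)`. -/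
noncomputable def ρ5 : Matrix (Fin 4) (Fin 4) ℂ :=
  Complex.exp ((Real.pi : ℂ) * Complex.I / 8) •
    Matrix.diagonal ![-1, Complex.I, -1, Complex.I]

/-- The scalar identity relating the prefactors of the odd and even generators. -/
lemma phase_eq :
    Complex.exp ((Real.pi : ℂ) * Complex.I / 8) =
      -(1 + Complex.I) *
        (-(Complex.exp (-(Real.pi : ℂ) * Complex.I / 8) / ((Real.sqrt 2 : ℝ) : ℂ))) := by
  have hs : ((Real.sqrt 2 : ℝ) : ℂ) ^ 2 = 2 := by
    rw [← Complex.ofReal_pow, Real.sq_sqrt (by norm_num)]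
    norm_num
  have hs0 : ((Real.sqrt 2 : ℝ) : ℂ) ≠ 0 := by
    intro h
    simp [h] at hs
  have h4 : Complex.exp ((Real.pi : ℂ) * Complex.I / 4) =
      (1 + Complex.I) / ((Real.sqrt 2 : ℝ) : ℂ) := by
    have e : (Real.pi : ℂ) * Complex.I / 4 = ((Real.pi / 4 : ℝ) : ℂ) * Complex.I := by
      push_cast
      ring
    rw [e, Complex.exp_mul_I, ← Complex.ofReal_cos, ← Complex.ofReal_sin,
      Real.cos_pi_div_four, Real.sin_pi_div_four, eq_div_iff hs0]
    push_cast
    linear_combination (1 + Complex.I) / 2 * hs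
  have e : (Real.pi : ℂ) * Complex.I / 8 =
      (Real.pi : ℂ) * Complex.I / 4 + -(Real.pi : ℂ) * Complex.I / 8 := by
    ring
  rw [e, Complex.exp_add, h4]
  ring

/-- Reduction of a braid relation between scaled matrices to an identity between the unscaled
matrices, given the matching identity between the scalars. -/
lemma smul_braid {a b c : ℂ} {D M : Matrix (Fin 4) (Fin 4) ℂ} (hab : a = c * b)
    (h : M * D * M = c • (D * M * D)) :
    (a • D) * (b • M) * (a • D) = (b • M) * (a • D) * (b • M) := by
  simp only [smul_mul_assoc, mul_smul_comm, smul_smul, h]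
  congr 1
  rw [hab]
  ring

/-- The Yang–Baxter equations for the Ising representation of `B₆`:
`ρᵢ ρᵢ₊₁ ρᵢ = ρᵢ₊₁ ρᵢ ρᵢ₊₁` for `i = 1, 2, 3, 4`. -/
theorem ising_two_qubit_yang_baxter :
    ρ1 * ρ2 * ρ1 = ρ2 * ρ1 * ρ2 ∧
    ρ2 * ρ3 * ρ2 = ρ3 * ρ2 * ρ3 ∧
    ρ3 * ρ4 * ρ3 = ρ4 * ρ3 * ρ4 ∧
    ρ4 * ρ5 * ρ4 = ρ5 * ρ4 * ρ5 := by
  refine ⟨smul_braid phase_eq ?_, (smul_braid phase_eq ?_).symm,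
    smul_braid phase_eq ?_, (smul_braid phase_eq ?_).symm⟩
  all_goals
    ext i j
    rw [Matrix.mul_apply, Matrix.smul_apply]
    simp only [Matrix.mul_diagonal, Matrix.diagonal_mul, Fin.sum_univ_four]
    fin_cases i <;> fin_cases j <;> simp <;>
      grind [Complex.I_mul_I]
end
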